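/- Let p and q be real numbers with 0 < p and 5p < q, and set b₀ = (1/p)·√((q−5p)/(5(q−p))), ξ₀ = (1,0,0) and ξ± = (1, ±b₀, 0). Then V(ξ₀) = 4pq and V(ξ₊) = V(ξ₋) = 4pq · 25(q−p)²/(16q²) = 25p(q−p)²/(4q), and moreover V(ξ₀) < V(ξ±). -/

import Mathlib

/-- Product of the values of the affine function `ξ(x,y) = 1 + bx + cy` at the four
vertices `(−p,−q), (−p,q), (p,q), (p,−q)` of the moment rectangle. -/
def xiProd (p q b c : ℝ) : ℝ :=
  (1 - p * b - q * c) * (1 - p * b + q * c) * (1 + p * b + q * c) * (1 + p * b - q * c)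

/-- Total volume `V(ξ) = 4pq/(ξ₁ξ₂ξ₃ξ₄)` of the Sasaki structure with Reeb vector
`ξ = (1, b, c)`. -/
noncomputable def sasakiVol (p q b c : ℝ) : ℝ := 4 * p * q / xiProd p q b c

/-!
The values of `ξ = (1, b, c)` at opposite vertices are `1 ± s` and `1 ± t` with `s = p * b + q * c`
and `t = p * b - q * c`, so their product is `(1 - s ^ 2) * (1 - t ^ 2)`. On the Reeb cone
`|s|, |t| < 1` it is less than `1` away from `ξ₀`: thus `ξ₀` is the strict volume minimiser. On the
line `c = 0` it collapses to `(1 - (p * b) ^ 2) ^ 2`, and at `b = ±b₀` the base of this square is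
`4 * q / (5 * (q - p))`.
-/

lemma sq_add_lt_one_of_abs_add_abs_lt_one {u v : ℝ} (h : |u| + |v| < 1) : (u + v) ^ 2 < 1 :=
  (sq_lt_one_iff_abs_lt_one _).mpr ((abs_add_le u v).trans_lt h)

lemma sq_sub_lt_one_of_abs_add_abs_lt_one {u v : ℝ} (h : |u| + |v| < 1) : (u - v) ^ 2 < 1 :=
  (sq_lt_one_iff_abs_lt_one _).mpr ((abs_sub u v).trans_lt h)

lemma xiProd_eq_one_sub_sq_mul (p q b c : ℝ) :
    xiProd p q b c = (1 - (p * b + q * c) ^ 2) * (1 - (p * b - q * c) ^ 2) := by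
  unfold xiProd
  ring

lemma xiProd_neg_left (p q b c : ℝ) : xiProd p q (-b) c = xiProd p q b c := by
  unfold xiProd
  ring

lemma sasakiVol_neg_left (p q b c : ℝ) : sasakiVol p q (-b) c = sasakiVol p q b c := by
  rw [sasakiVol, sasakiVol, xiProd_neg_left]

lemma xiProd_zero_right (p q b : ℝ) : xiProd p q b 0 = (1 - (p * b) ^ 2) ^ 2 := by
  rw [xiProd_eq_one_sub_sq_mul, mul_zero, add_zero, sub_zero, sq (1 - _)]

lemma sasakiVol_zero_zero (p q : ℝ) : sasakiVol p q 0 0 = 4 * p * q := by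
  simp [sasakiVol, xiProd_zero_right]

section ReebCone

-- `|p * b| + |q * c| < 1` says that `1 + b * x + c * y` is positive on the moment rectangle.
variable {p q b c : ℝ}

lemma xiProd_pos (h : |p * b| + |q * c| < 1) : 0 < xiProd p q b c := by
  rw [xiProd_eq_one_sub_sq_mul]
  exact mul_pos (sub_pos.mpr (sq_add_lt_one_of_abs_add_abs_lt_one h))
    (sub_pos.mpr (sq_sub_lt_one_of_abs_add_abs_lt_one h))

lemma xiProd_lt_one (h : |p * b| + |q * c| < 1) (hbc : p * b ≠ 0 ∨ q * c ≠ 0) :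
    xiProd p q b c < 1 := by
  have hsum : 0 < (p * b + q * c) ^ 2 + (p * b - q * c) ^ 2 := by
    have hsum_eq : (p * b + q * c) ^ 2 + (p * b - q * c) ^ 2 =
        2 * ((p * b) ^ 2 + (q * c) ^ 2) := by ring
    rw [hsum_eq]
    rcases hbc with hb | hc <;> positivity
  have hs := (sq_add_lt_one_of_abs_add_abs_lt_one h).le
  have ht := (sq_sub_lt_one_of_abs_add_abs_lt_one h).le
  have hst_le_s : (p * b + q * c) ^ 2 * (p * b - q * c) ^ 2 ≤ (p * b + q * c) ^ 2 :=
    mul_le_of_le_one_right (sq_nonneg _) ht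
  have hst_le_t : (p * b + q * c) ^ 2 * (p * b - q * c) ^ 2 ≤ (p * b - q * c) ^ 2 :=
    mul_le_of_le_one_left (sq_nonneg _) hs
  rw [xiProd_eq_one_sub_sq_mul]
  linarith

theorem sasakiVol_zero_zero_lt (hpq : 0 < p * q) (h : |p * b| + |q * c| < 1)
    (hbc : b ≠ 0 ∨ c ≠ 0) : sasakiVol p q 0 0 < sasakiVol p q b c := by
  have hlt : xiProd p q b c < 1 :=
    xiProd_lt_one h (hbc.imp (mul_ne_zero (left_ne_zero_of_mul hpq.ne'))
      (mul_ne_zero (right_ne_zero_of_mul hpq.ne')))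
  rw [sasakiVol_zero_zero, sasakiVol, lt_div_iff₀ (xiProd_pos h)]
  exact mul_lt_of_lt_one_right (by linarith) hlt

end ReebCone

lemma sasakiVol_of_sq_eq {p q b : ℝ} (hpq : p ≠ q)
    (hb : (p * b) ^ 2 = (q - 5 * p) / (5 * (q - p))) :
    sasakiVol p q b 0 = 4 * p * q * (25 * (q - p) ^ 2 / (16 * q ^ 2)) := by
  have hqp : q - p ≠ 0 := sub_ne_zero.mpr hpq.symm
  have hbase : 1 - (p * b) ^ 2 = 4 * q / (5 * (q - p)) := by
    rw [hb]
    field_simp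
    ring
  have hprod : xiProd p q b 0 = 16 * q ^ 2 / (25 * (q - p) ^ 2) := by
    rw [xiProd_zero_right, hbase, div_pow, mul_pow, mul_pow]
    norm_num
  rw [sasakiVol, hprod, div_eq_mul_inv, inv_div]

/-- for `0 < p`, `5p < q` and `b₀ = (1/p)·√((q−5p)/(5(q−p)))`, the
volumes of the Sasaki structures with Reeb vectors `ξ₀ = (1,0,0)` and
`ξ± = (1, ±b₀, 0)` satisfy `V(ξ₀) = 4pq`,
`V(ξ₊) = V(ξ₋) = 4pq · 25(q−p)²/(16q²) = 25p(q−p)²/(4q)`, and `V(ξ₀) < V(ξ±)`. -/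
theorem stmt2 (p q : ℝ) (hp : 0 < p) (hq : 5 * p < q)
    (b₀ : ℝ) (hb₀ : b₀ = (1 / p) * Real.sqrt ((q - 5 * p) / (5 * (q - p)))) :
    sasakiVol p q 0 0 = 4 * p * q ∧
    sasakiVol p q b₀ 0 = sasakiVol p q (-b₀) 0 ∧
    sasakiVol p q b₀ 0 = 4 * p * q * (25 * (q - p) ^ 2 / (16 * q ^ 2)) ∧
    sasakiVol p q b₀ 0 = 25 * p * (q - p) ^ 2 / (4 * q) ∧
    sasakiVol p q 0 0 < sasakiVol p q b₀ 0 := by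
  have hq₀ : 0 < q := by linarith
  have hr : 0 < (q - 5 * p) / (5 * (q - p)) := div_pos (by linarith) (by linarith)
  have hsq : (p * b₀) ^ 2 = (q - 5 * p) / (5 * (q - p)) := by
    rw [hb₀, ← mul_assoc, mul_one_div_cancel hp.ne', one_mul, Real.sq_sqrt hr.le]
  have hb₀_ne : b₀ ≠ 0 := by
    rintro rfl
    simp only [mul_zero, zero_pow two_ne_zero] at hsq
    exact hr.ne hsq
  have hcone : |p * b₀| + |q * 0| < 1 := by
    rw [mul_zero, abs_zero, add_zero, ← sq_lt_one_iff_abs_lt_one, hsq, div_lt_one (by linarith)]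
    linarith
  have hvol := sasakiVol_of_sq_eq (by linarith : p < q).ne hsq
  refine ⟨sasakiVol_zero_zero p q, (sasakiVol_neg_left p q b₀ 0).symm, hvol, ?_,
    sasakiVol_zero_zero_lt (mul_pos hp hq₀) hcone (.inl hb₀_ne)⟩
  rw [hvol]
  field_simp
  ring
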